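/- (Finite-time blow-down for p < 1, γ < 0.) Let l > 0, γ < 0 and p < 1; write p = 1 - ε with ε > 0. Let u₀ > 0 be a smooth function on [-l,l] with ∂ₓₓ log u₀ < 0 satisfying the compatibility condition, and let u be a positive classical solution of the 1D logarithmic diffusion problem on [-l,l] × [0,T) with initial data u₀. Then the mass m(t) = ∫_{-l}^{l} u(x,t) dx satisfies m(t)^{1+ε} ≤ m(0)^{1+ε} + α t for all t ∈ [0,T), where α = 2γ(1+ε)(2l)^{ε} < 0. In particular T ≤ -m(0)^{1+ε}/α < ∞: the solution blows down in finite time and cannot be extended as a positive classical solution beyond time -m(0)^{1+ε}/α. -/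

import Mathlib

/- STATEMENT 17: Finite-time blow-down for p = 1 - ε < 1, γ < 0: the mass
m(t) = ∫_{-l}^{l} u(x,t) dx satisfies m(t)^{1+ε} ≤ m(0)^{1+ε} + αt with
α = 2γ(1+ε)(2l)^ε < 0, so T ≤ -m(0)^{1+ε}/α. -/

open Set Real

/-- `u` is a positive classical solution on `[-l,l] × [0,T)` of
`∂ₜu = ∂ₓₓ log u` with boundary conditions `∂ₓu(±l,t) = ±2γ u(±l,t)^p` and initial data `u₀`. -/
def IsLogDiffSol (l γ p T : ℝ) (u₀ : ℝ → ℝ) (u : ℝ → ℝ → ℝ) : Prop :=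
  ContDiffOn ℝ 2 (fun q : ℝ × ℝ => u q.1 q.2) (Icc (-l) l ×ˢ Ico 0 T) ∧
  (∀ x ∈ Icc (-l) l, ∀ t ∈ Ico (0:ℝ) T, 0 < u x t) ∧
  (∀ x ∈ Icc (-l) l, ∀ t ∈ Ioo (0:ℝ) T,
    deriv (u x) t = deriv (deriv (fun y => Real.log (u y t))) x) ∧
  (∀ t ∈ Ioo (0:ℝ) T, deriv (fun y => u y t) l = 2 * γ * u l t ^ p) ∧
  (∀ t ∈ Ioo (0:ℝ) T, deriv (fun y => u y t) (-l) = -(2 * γ * u (-l) t ^ p)) ∧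
  (∀ x ∈ Icc (-l) l, u x 0 = u₀ x)

/-- `u` is a global (`T = ∞`) positive classical solution on `[-l,l] × [0,∞)`. -/
def IsLogDiffSolGlobal (l γ p : ℝ) (u₀ : ℝ → ℝ) (u : ℝ → ℝ → ℝ) : Prop :=
  ContDiffOn ℝ 2 (fun q : ℝ × ℝ => u q.1 q.2) (Icc (-l) l ×ˢ Ici 0) ∧
  (∀ x ∈ Icc (-l) l, ∀ t ∈ Ici (0:ℝ), 0 < u x t) ∧
  (∀ x ∈ Icc (-l) l, ∀ t ∈ Ioi (0:ℝ),
    deriv (u x) t = deriv (deriv (fun y => Real.log (u y t))) x) ∧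
  (∀ t ∈ Ioi (0:ℝ), deriv (fun y => u y t) l = 2 * γ * u l t ^ p) ∧
  (∀ t ∈ Ioi (0:ℝ), deriv (fun y => u y t) (-l) = -(2 * γ * u (-l) t ^ p)) ∧
  (∀ x ∈ Icc (-l) l, u x 0 = u₀ x)

/-- The compatibility condition `∂ₓ log u₀(±l) = ±2γ u₀(±l)^{p-1}`. -/
def CompatCond (l γ p : ℝ) (u₀ : ℝ → ℝ) : Prop :=
  deriv (fun x => Real.log (u₀ x)) l = 2 * γ * u₀ l ^ (p - 1) ∧
  deriv (fun x => Real.log (u₀ x)) (-l) = -(2 * γ * u₀ (-l) ^ (p - 1))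

/-- `u_min(t) = min_{x ∈ [-l,l]} u(x,t)`. -/
noncomputable def uMin (l : ℝ) (u : ℝ → ℝ → ℝ) (t : ℝ) : ℝ :=
  sInf ((fun x => u x t) '' Icc (-l) l)

/-- `u_max(t) = max_{x ∈ [-l,l]} u(x,t)`. -/
noncomputable def uMax (l : ℝ) (u : ℝ → ℝ → ℝ) (t : ℝ) : ℝ :=
  sSup ((fun x => u x t) '' Icc (-l) l)

/-!
The equation and the boundary conditions extend by continuity to `t = 0`. Because `u₀` is
log-concave, the stationary function `u₀` is therefore a supersolution, and `u(·, t) ≤ u(·, 0)` by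
comparison. Comparing `u` with its own time shifts then shows that `u` is nonincreasing in time,
hence `∂ₓₓ log u = ∂ₜu ≤ 0`: log-concavity persists, and `u(·, t)` is bounded below by its smaller
boundary value `c`. Writing `p = 1 - ε`, the mass satisfies `m ≥ 2lc` and
`m' = 2γ (u(l, t)^(-ε) + u(-l, t)^(-ε)) ≤ 2γ c^(-ε)`, so that `(m^(1+ε))' ≤ 2γ (1 + ε) (2l)^ε`,
and positivity of `m` bounds the lifetime.

The comparison principle holds for any locally Lipschitz boundary flux. At a first contact of
`log w` with `log u - δ * barrier`, the barrier tips the balance both at the boundary and inside;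
then `δ → 0`.
-/

open Filter Topology MeasureTheory
open scoped NNReal

/-! ### Necessary conditions at a minimum -/

lemma mul_sub_nonneg_of_isMinOn {f : ℝ → ℝ} {f' x y : ℝ} {s : Set ℝ} (hs : Convex ℝ s)
    (hx : x ∈ s) (hy : y ∈ s) (hf : HasDerivWithinAt f f' s x) (hmin : IsMinOn f s x) :
    0 ≤ f' * (y - x) := by
  simpa [mul_comm] using hmin.localize.hasFDerivWithinAt_nonneg hf.hasFDerivWithinAt
    (sub_mem_posTangentConeAt_of_segment_subset (hs.segment_subset hx hy))

lemma second_deriv_nonneg_of_isLocalMin {f f' : ℝ → ℝ} {f'' x : ℝ}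
    (hf : ∀ᶠ y in 𝓝 x, HasDerivAt f (f' y) y) (hf' : HasDerivAt f' f'' x)
    (hmin : IsLocalMin f x) : 0 ≤ f'' := by
  have hderiv : deriv f =ᶠ[𝓝 x] f' := hf.mono fun y hy => hy.deriv
  have hderiv2 : deriv (deriv f) x = f'' := by rw [hderiv.deriv_eq, hf'.deriv]
  by_contra! hneg
  have hmax : IsLocalMax f x :=
    isLocalMax_of_deriv_deriv_neg (by rwa [hderiv2]) hmin.deriv_eq_zero hf.self_of_nhds.continuousAt
  -- A point that is both a local minimum and a local maximum makes `f` locally constant.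
  have hconst : f =ᶠ[𝓝 x] fun _ => f x := by
    filter_upwards [hmin, hmax] with y h₁ h₂ using le_antisymm h₂ h₁
  have hzero : deriv (deriv f) x = 0 := by simp [hconst.deriv.deriv_eq]
  exact hneg.ne (hderiv2.symm.trans hzero)

lemma exists_first_zero {X : Type*} [TopologicalSpace X] [T2Space X] {K : Set X}
    {F : X → ℝ → ℝ} {τ t₁ : ℝ} {x₁ : X} (hK : IsCompact K)
    (hF : ContinuousOn ↿F (K ×ˢ Icc 0 τ)) (hpos : ∀ x ∈ K, 0 < F x 0)
    (hx₁ : x₁ ∈ K) (ht₁ : t₁ ∈ Icc 0 τ) (hle : F x₁ t₁ ≤ 0) :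
    ∃ x₀ ∈ K, ∃ t₀ ∈ Ioc 0 τ, F x₀ t₀ = 0 ∧ ∀ x ∈ K, ∀ t ∈ Icc 0 t₀, 0 ≤ F x t := by
  have hcompact : IsCompact (K ×ˢ Icc 0 τ ∩ ↿F ⁻¹' Iic 0) :=
    (hK.prod isCompact_Icc).of_isClosed_subset
      (hF.preimage_isClosed_of_isClosed (hK.prod isCompact_Icc).isClosed isClosed_Iic)
      inter_subset_left
  obtain ⟨⟨x₀, t₀⟩, ⟨⟨hx₀, ht₀⟩, hle₀⟩, hfirst⟩ :=
    hcompact.exists_isMinOn ⟨(x₁, t₁), ⟨hx₁, ht₁⟩, hle⟩ continuous_snd.continuousOn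
  have hne : t₀ ≠ 0 := by
    rintro rfl
    exact (hpos x₀ hx₀).not_ge hle₀
  have ht₀pos : 0 < t₀ := ht₀.1.lt_of_ne' hne
  have hbefore : ∀ x ∈ K, ∀ t ∈ Ico 0 t₀, 0 ≤ F x t := by
    intro x hx t ht
    by_contra! hlt
    have hmem : (x, t) ∈ K ×ˢ Icc 0 τ ∩ ↿F ⁻¹' Iic 0 :=
      ⟨⟨hx, ht.1, ht.2.le.trans ht₀.2⟩, hlt.le⟩
    exact ht.2.not_ge (hfirst hmem)
  have huntil : ∀ x ∈ K, ∀ t ∈ Icc 0 t₀, 0 ≤ F x t := by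
    intro x hx t ht
    rw [← closure_Ico hne.symm] at ht
    refine le_on_closure (hbefore x hx) continuousOn_const ?_ ht
    rw [closure_Ico hne.symm]
    exact hF.comp (f := fun s : ℝ => (x, s)) (by fun_prop)
      fun s hs => ⟨hx, hs.1, hs.2.trans ht₀.2⟩
  exact ⟨x₀, hx₀, t₀, ⟨ht₀pos, ht₀.2⟩, hle₀.antisymm (huntil x₀ hx₀ t₀ ⟨ht₀.1, le_rfl⟩), huntil⟩

/-! ### The comparison principle -/

/-- A positive function `u` on `[a,b] × [0,T)` together with its one-sided partial derivatives
`A = ∂ₓ log u`, `B = ∂ₓₓ log u` and `V = ∂ₜu`. Unlike the two-sided `deriv`, these depend only on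
the values of `u` on that set. -/
structure HasLogDerivs (a b T : ℝ) (u A B V : ℝ → ℝ → ℝ) : Prop where
  pos : ∀ x ∈ Icc a b, ∀ t ∈ Ico 0 T, 0 < u x t
  continuousOn : ContinuousOn ↿u (Icc a b ×ˢ Ico 0 T)
  continuousOn_second : ContinuousOn ↿B (Icc a b ×ˢ Ico 0 T)
  hasDeriv_log : ∀ x ∈ Icc a b, ∀ t ∈ Ico 0 T,
    HasDerivWithinAt (fun y => log (u y t)) (A x t) (Icc a b) x
  hasDeriv_slope : ∀ x ∈ Icc a b, ∀ t ∈ Ico 0 T,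
    HasDerivWithinAt (fun y => A y t) (B x t) (Icc a b) x
  hasDeriv_time : ∀ x ∈ Icc a b, ∀ t ∈ Ico 0 T, HasDerivWithinAt (u x) (V x t) (Ico 0 T) t

/-- A classical subsolution of `∂ₜu = ∂ₓₓ log u` on `[a,b] × [0,T)` with outward boundary flux
`g u`, that is `∂ₓ log u = g u` at `b` and `-∂ₓ log u = g u` at `a`. -/
structure IsSubsolution (a b T : ℝ) (g : ℝ → ℝ) (u A B V : ℝ → ℝ → ℝ) : Prop
    extends HasLogDerivs a b T u A B V where
  time_le : ∀ x ∈ Icc a b, ∀ t ∈ Ico 0 T, V x t ≤ B x t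
  flux_left : ∀ t ∈ Ico 0 T, -A a t ≤ g (u a t)
  flux_right : ∀ t ∈ Ico 0 T, A b t ≤ g (u b t)

/-- A classical supersolution of the problem of `IsSubsolution`. -/
structure IsSupersolution (a b T : ℝ) (g : ℝ → ℝ) (u A B V : ℝ → ℝ → ℝ) : Prop
    extends HasLogDerivs a b T u A B V where
  le_time : ∀ x ∈ Icc a b, ∀ t ∈ Ico 0 T, B x t ≤ V x t
  flux_left : ∀ t ∈ Ico 0 T, g (u a t) ≤ -A a t
  flux_right : ∀ t ∈ Ico 0 T, g (u b t) ≤ A b t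

/-- A classical solution of the problem of `IsSubsolution`; here `∂ₓₓ log u` and `∂ₜu` are the same
function `V`. -/
structure IsFluxSolution (a b T : ℝ) (g : ℝ → ℝ) (u A V : ℝ → ℝ → ℝ) : Prop
    extends HasLogDerivs a b T u A V V where
  flux_left : ∀ t ∈ Ico 0 T, -A a t = g (u a t)
  flux_right : ∀ t ∈ Ico 0 T, A b t = g (u b t)

/-- The weight by which `log u` is lowered in the proof of the comparison principle: its growth
towards the boundary, governed by `L`, beats the flux; its growth in time, governed by `K`, beats
the equation. -/
noncomputable def barrier (a b L K x t : ℝ) : ℝ := exp (L * ((x - a) * (x - b)) + K * t)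

/-- The gap between `log w` and the lowered function `log u - δ * barrier`. -/
noncomputable def barrierGap (a b L K δ : ℝ) (w u : ℝ → ℝ → ℝ) (x t : ℝ) : ℝ :=
  log (w x t) - log (u x t) + δ * barrier a b L K x t

section Comparison

variable {a b T : ℝ} {g : ℝ → ℝ} {w A' B' V' u A B V : ℝ → ℝ → ℝ} {L K δ x t τ : ℝ}

lemma barrier_pos : 0 < barrier a b L K x t := exp_pos _

lemma barrier_le_exp (hL : 0 ≤ L) (hK : 0 ≤ K) (hx : x ∈ Icc a b) (ht : t ≤ τ) :
    barrier a b L K x t ≤ exp (K * τ) := by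
  have hprod : (x - a) * (x - b) ≤ 0 :=
    mul_nonpos_of_nonneg_of_nonpos (sub_nonneg.2 hx.1) (sub_nonpos.2 hx.2)
  have hspace : L * ((x - a) * (x - b)) ≤ 0 := mul_nonpos_of_nonneg_of_nonpos hL hprod
  have htime : K * t ≤ K * τ := mul_le_mul_of_nonneg_left ht hK
  exact exp_le_exp.2 (by linarith)

lemma hasDerivAt_barrier_space :
    HasDerivAt (fun y => barrier a b L K y t)
      (L * (2 * x - a - b) * barrier a b L K x t) x := by
  have hquad : HasDerivAt (fun y => L * ((y - a) * (y - b)) + K * t)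
      (L * (1 * (x - b) + (x - a) * 1)) x :=
    ((((hasDerivAt_id x).sub_const a).mul ((hasDerivAt_id x).sub_const b)).const_mul L).add_const _
  exact hquad.exp.congr_deriv (by rw [barrier]; ring)

lemma hasDerivAt_barrier_slope :
    HasDerivAt (fun y => L * (2 * y - a - b) * barrier a b L K y t)
      ((2 * L + (L * (2 * x - a - b)) ^ 2) * barrier a b L K x t) x := by
  have hlin : HasDerivAt (fun y => L * (2 * y - a - b)) (L * (2 * 1)) x :=
    ((((hasDerivAt_id x).const_mul 2).sub_const a).sub_const b).const_mul L
  exact (hlin.mul hasDerivAt_barrier_space).congr_deriv (by ring)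

lemma hasDerivAt_barrier_time :
    HasDerivAt (fun s => barrier a b L K x s) (K * barrier a b L K x t) t := by
  have hlin : HasDerivAt (fun s => L * ((x - a) * (x - b)) + K * s) (K * 1) t :=
    ((hasDerivAt_id t).const_mul K).const_add _
  exact hlin.exp.congr_deriv (by rw [barrier]; ring)

lemma continuous_barrier : Continuous ↿(barrier a b L K) := by
  unfold barrier
  fun_prop

/-- `(x, t)` is a point where `barrierGap` vanishes for the first time. -/
structure IsFirstContact (a b L K δ : ℝ) (w u : ℝ → ℝ → ℝ) (x t : ℝ) : Prop where
  mem : x ∈ Icc a b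
  time_pos : 0 < t
  gap_eq_zero : barrierGap a b L K δ w u x t = 0
  gap_nonneg : ∀ y ∈ Icc a b, ∀ s ∈ Icc 0 t, 0 ≤ barrierGap a b L K δ w u y s

lemma hasDerivWithinAt_barrierGap_space (hw : HasLogDerivs a b T w A' B' V')
    (hu : HasLogDerivs a b T u A B V) (hx : x ∈ Icc a b) (ht : t ∈ Ico 0 T) :
    HasDerivWithinAt (fun y => barrierGap a b L K δ w u y t)
      (A' x t - A x t + δ * (L * (2 * x - a - b) * barrier a b L K x t)) (Icc a b) x :=
  ((hw.hasDeriv_log x hx t ht).sub (hu.hasDeriv_log x hx t ht)).add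
    (hasDerivAt_barrier_space.const_mul δ).hasDerivWithinAt

lemma hasDerivWithinAt_barrierGap_slope (hw : HasLogDerivs a b T w A' B' V')
    (hu : HasLogDerivs a b T u A B V) (hx : x ∈ Icc a b) (ht : t ∈ Ico 0 T) :
    HasDerivWithinAt
      (fun y => A' y t - A y t + δ * (L * (2 * y - a - b) * barrier a b L K y t))
      (B' x t - B x t + δ * ((2 * L + (L * (2 * x - a - b)) ^ 2) * barrier a b L K x t))
      (Icc a b) x :=
  ((hw.hasDeriv_slope x hx t ht).sub (hu.hasDeriv_slope x hx t ht)).add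
    (hasDerivAt_barrier_slope.const_mul δ).hasDerivWithinAt

lemma hasDerivWithinAt_barrierGap_time (hw : HasLogDerivs a b T w A' B' V')
    (hu : HasLogDerivs a b T u A B V) (hx : x ∈ Icc a b) (ht : t ∈ Ico 0 T) :
    HasDerivWithinAt (barrierGap a b L K δ w u x)
      (V' x t / w x t - V x t / u x t + δ * (K * barrier a b L K x t)) (Ico 0 T) t :=
  (((hw.hasDeriv_time x hx t ht).log (hw.pos x hx t ht).ne').sub
    ((hu.hasDeriv_time x hx t ht).log (hu.pos x hx t ht).ne')).add
    (hasDerivAt_barrier_time.const_mul δ).hasDerivWithinAt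

lemma continuousOn_barrierGap (hw : HasLogDerivs a b T w A' B' V')
    (hu : HasLogDerivs a b T u A B V) :
    ContinuousOn ↿(barrierGap a b L K δ w u) (Icc a b ×ˢ Ico 0 T) :=
  ((hw.continuousOn.log fun q hq => (hw.pos q.1 hq.1 q.2 hq.2).ne').sub
    (hu.continuousOn.log fun q hq => (hu.pos q.1 hq.1 q.2 hq.2).ne')).add
    (continuous_barrier.continuousOn.const_smul δ)

namespace IsFirstContact

variable (hc : IsFirstContact a b L K δ w u x t)
include hc

lemma eq_mul_exp (hw : HasLogDerivs a b T w A' B' V') (hu : HasLogDerivs a b T u A B V)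
    (htT : t < T) : w x t = u x t * exp (-(δ * barrier a b L K x t)) := by
  have hwpos : 0 < w x t := hw.pos x hc.mem t ⟨hc.time_pos.le, htT⟩
  have hupos : 0 < u x t := hu.pos x hc.mem t ⟨hc.time_pos.le, htT⟩
  have hlog : log (w x t) = log (u x t) + -(δ * barrier a b L K x t) := by
    have hgap := hc.gap_eq_zero
    rw [barrierGap] at hgap
    linarith
  rw [← exp_log hwpos, hlog, exp_add, exp_log hupos]

lemma slope_mul_nonneg (hw : HasLogDerivs a b T w A' B' V') (hu : HasLogDerivs a b T u A B V)
    (htT : t < T) {y : ℝ} (hy : y ∈ Icc a b) :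
    0 ≤ (A' x t - A x t + δ * (L * (2 * x - a - b) * barrier a b L K x t)) * (y - x) := by
  refine mul_sub_nonneg_of_isMinOn (convex_Icc a b) hc.mem hy
    (hasDerivWithinAt_barrierGap_space hw hu hc.mem ⟨hc.time_pos.le, htT⟩) fun z hz => ?_
  exact hc.gap_eq_zero.trans_le (hc.gap_nonneg z hz t ⟨hc.time_pos.le, le_rfl⟩)

lemma second_nonneg (hw : HasLogDerivs a b T w A' B' V') (hu : HasLogDerivs a b T u A B V)
    (htT : t < T) (hx : x ∈ Ioo a b) :
    0 ≤ B' x t - B x t + δ * ((2 * L + (L * (2 * x - a - b)) ^ 2) * barrier a b L K x t) := by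
  have ht : t ∈ Ico 0 T := ⟨hc.time_pos.le, htT⟩
  refine second_deriv_nonneg_of_isLocalMin (f := fun y => barrierGap a b L K δ w u y t) ?_
    ((hasDerivWithinAt_barrierGap_slope hw hu hc.mem ht).hasDerivAt (Icc_mem_nhds hx.1 hx.2)) ?_
  · filter_upwards [Ioo_mem_nhds hx.1 hx.2] with y hy
    exact (hasDerivWithinAt_barrierGap_space hw hu (Ioo_subset_Icc_self hy) ht).hasDerivAt
      (Icc_mem_nhds hy.1 hy.2)
  · filter_upwards [Icc_mem_nhds hx.1 hx.2] with y hy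
    exact hc.gap_eq_zero.trans_le (hc.gap_nonneg y hy t ⟨hc.time_pos.le, le_rfl⟩)

lemma time_nonpos (hw : HasLogDerivs a b T w A' B' V') (hu : HasLogDerivs a b T u A B V)
    (htT : t < T) :
    V' x t / w x t - V x t / u x t + δ * (K * barrier a b L K x t) ≤ 0 := by
  have hderiv := (hasDerivWithinAt_barrierGap_time (L := L) (K := K) (δ := δ) hw hu hc.mem
    ⟨hc.time_pos.le, htT⟩).mono (Icc_subset_Ico_right htT)
  have hmin := mul_sub_nonneg_of_isMinOn (convex_Icc 0 t) (right_mem_Icc.2 hc.time_pos.le)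
    (left_mem_Icc.2 hc.time_pos.le) hderiv fun s hs =>
      hc.gap_eq_zero.trans_le (hc.gap_nonneg x hc.mem s hs)
  exact nonpos_of_mul_nonneg_left hmin (by linarith [hc.time_pos])

end IsFirstContact

lemma abs_sub_apply_mul_exp_neg_le {C : ℝ≥0} {μ M y s : ℝ}
    (hg : LipschitzOnWith C g (Icc (μ / 3) M)) (hμ : 0 < μ) (hy : y ∈ Icc μ M)
    (hs : s ∈ Icc 0 1) : |g y - g (y * exp (-s))| ≤ C * M * s := by
  have hy0 : 0 < y := hμ.trans_le hy.1
  have hexp_ge : 1 / 3 ≤ exp (-s) := by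
    rw [exp_neg, ← one_div]
    exact one_div_le_one_div_of_le (exp_pos s)
      ((exp_le_exp.2 hs.2).trans exp_one_lt_three.le)
  have hexp_le : exp (-s) ≤ 1 := exp_le_one_iff.2 (neg_nonpos.2 hs.1)
  have hmem : y * exp (-s) ∈ Icc (μ / 3) M :=
    ⟨by nlinarith [hy.1], (mul_le_of_le_one_right hy0.le hexp_le).trans hy.2⟩
  have hmove : y * (1 - exp (-s)) ≤ M * s :=
    mul_le_mul hy.2 (by linarith [one_sub_le_exp_neg s]) (sub_nonneg.2 hexp_le)
      (hy0.le.trans hy.2)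
  calc |g y - g (y * exp (-s))| ≤ C * |y - y * exp (-s)| := by
        simpa only [Real.dist_eq] using
          hg.dist_le_mul y ⟨by linarith [hy.1], hy.2⟩ (y * exp (-s)) hmem
    _ = C * (y * (1 - exp (-s))) := by
        rw [← mul_one_sub, abs_of_nonneg (mul_nonneg hy0.le (sub_nonneg.2 hexp_le))]
    _ ≤ C * M * s := by
        rw [mul_assoc]
        exact mul_le_mul_of_nonneg_left hmove C.2

lemma neg_le_div_mul_exp_neg_sub_div {β β' c μ N y s : ℝ} (hμ : 0 < μ) (hy : μ ≤ y)
    (hβ : |β| ≤ N) (hc : 0 ≤ c) (hs : s ∈ Icc 0 1) (hββ' : β - c * s ≤ β') :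
    -((2 * N + 3 * c) / μ * s) ≤ β' / (y * exp (-s)) - β / y := by
  have hy0 : 0 < y := hμ.trans_le hy
  have hexp : |exp s - 1| ≤ 2 * s :=
    (abs_exp_sub_one_le (abs_le.2 ⟨by linarith [hs.1], hs.2⟩)).trans_eq (by rw [abs_of_nonneg hs.1])
  have hexp_le : exp s ≤ 3 := (exp_le_exp.2 hs.2).trans exp_one_lt_three.le
  have hgrowth : -(N * (2 * s)) ≤ β * (exp s - 1) :=
    (abs_le.1 ((abs_mul β _).le.trans
      (mul_le_mul hβ hexp (abs_nonneg _) ((abs_nonneg β).trans hβ)))).1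
  have hshift : c * s * exp s ≤ c * s * 3 :=
    mul_le_mul_of_nonneg_left hexp_le (mul_nonneg hc hs.1)
  have hnum : -((2 * N + 3 * c) * s) ≤ β' * exp s - β := by
    nlinarith [mul_le_mul_of_nonneg_right hββ' (exp_pos s).le]
  have hnonneg : 0 ≤ (2 * N + 3 * c) * s :=
    mul_nonneg (by linarith [(abs_nonneg β).trans hβ]) hs.1
  calc -((2 * N + 3 * c) / μ * s) = -((2 * N + 3 * c) * s / μ) := by ring
    _ ≤ -((2 * N + 3 * c) * s / y) :=
        neg_le_neg (div_le_div_of_nonneg_left hnonneg hμ hy)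
    _ = -((2 * N + 3 * c) * s) / y := (neg_div _ _).symm
    _ ≤ (β' * exp s - β) / y := div_le_div_of_nonneg_right hnum hy0.le
    _ = β' / (y * exp (-s)) - β / y := by
        rw [exp_neg]
        field_simp

lemma HasLogDerivs.exists_bounds (hu : HasLogDerivs a b T u A B V) (hτ : τ < T) :
    ∃ μ > 0, ∃ M N : ℝ, ∀ x ∈ Icc a b, ∀ t ∈ Icc 0 τ, u x t ∈ Icc μ M ∧ |B x t| ≤ N := by
  have hsub : Icc a b ×ˢ Icc 0 τ ⊆ Icc a b ×ˢ Ico 0 T := prod_mono_right (Icc_subset_Ico_right hτ)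
  have hcompact : IsCompact (Icc a b ×ˢ Icc 0 τ) := isCompact_Icc.prod isCompact_Icc
  obtain ⟨μ, hμ, hμu⟩ := hcompact.exists_forall_le' (hu.continuousOn.mono hsub)
    (a := 0) fun q hq => hu.pos q.1 (hsub hq).1 q.2 (hsub hq).2
  obtain ⟨M, hM⟩ := hcompact.bddAbove_image (hu.continuousOn.mono hsub)
  obtain ⟨N, hN⟩ := hcompact.exists_bound_of_continuousOn (hu.continuousOn_second.mono hsub)
  exact ⟨μ, hμ, M, N, fun x hx t ht =>
    ⟨⟨hμu (x, t) ⟨hx, ht⟩, hM (mem_image_of_mem _ (mk_mem_prod hx ht))⟩, hN (x, t) ⟨hx, ht⟩⟩⟩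

lemma IsSubsolution.not_isFirstContact_of_boundary {C : ℝ≥0} {μ M : ℝ}
    (hab : a < b) (hu : IsSubsolution a b T g u A B V)
    (hw : IsSupersolution a b T g w A' B' V') (hg : LipschitzOnWith C g (Icc (μ / 3) M))
    (hμ : 0 < μ) (hL : C * M < L * (b - a)) (htT : t < T) (hδ : 0 < δ)
    (hsmall : δ * barrier a b L K x t ≤ 1) (hux : u x t ∈ Icc μ M) (hx : x = a ∨ x = b) :
    ¬IsFirstContact a b L K δ w u x t := by
  intro hc
  have ht : t ∈ Ico 0 T := ⟨hc.time_pos.le, htT⟩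
  have hs : 0 < δ * barrier a b L K x t := mul_pos hδ barrier_pos
  have hflux := abs_sub_apply_mul_exp_neg_le hg hμ hux ⟨hs.le, hsmall⟩
  rw [← hc.eq_mul_exp hw.toHasLogDerivs hu.toHasLogDerivs htT] at hflux
  have hsteep := mul_lt_mul_of_pos_right hL hs
  rcases hx with rfl | rfl
  · have hslope := nonneg_of_mul_nonneg_left (hc.slope_mul_nonneg hw.toHasLogDerivs
      hu.toHasLogDerivs htT (right_mem_Icc.2 hab.le)) (sub_pos.2 hab)
    linarith [hu.flux_left t ht, hw.flux_left t ht, (abs_le.1 hflux).2]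
  · have hslope := nonpos_of_mul_nonneg_left (hc.slope_mul_nonneg hw.toHasLogDerivs
      hu.toHasLogDerivs htT (left_mem_Icc.2 hab.le)) (sub_neg.2 hab)
    linarith [hu.flux_right t ht, hw.flux_right t ht, (abs_le.1 hflux).2]

lemma IsSubsolution.not_isFirstContact_of_interior {μ N : ℝ} (hu : IsSubsolution a b T g u A B V)
    (hw : IsSupersolution a b T g w A' B' V') (hμ : 0 < μ) (hL : 0 ≤ L)
    (hK : (2 * N + 3 * (2 * L + (L * (b - a)) ^ 2)) / μ < K) (htT : t < T) (hδ : 0 < δ)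
    (hsmall : δ * barrier a b L K x t ≤ 1) (hux : μ ≤ u x t) (hB : |B x t| ≤ N)
    (hx : x ∈ Ioo a b) : ¬IsFirstContact a b L K δ w u x t := by
  intro hc
  have ht : t ∈ Ico 0 T := ⟨hc.time_pos.le, htT⟩
  have hs : 0 < δ * barrier a b L K x t := mul_pos hδ barrier_pos
  have hcenter : (L * (2 * x - a - b)) ^ 2 ≤ (L * (b - a)) ^ 2 := by
    refine sq_le_sq.2 ?_
    rw [abs_mul, abs_mul]
    refine mul_le_mul_of_nonneg_left ?_ (abs_nonneg L)
    rw [abs_of_pos (sub_pos.2 (hx.1.trans hx.2)), abs_le]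
    constructor <;> linarith [hx.1, hx.2]
  have hsecond : B x t - (2 * L + (L * (b - a)) ^ 2) * (δ * barrier a b L K x t) ≤ V' x t := by
    linarith [hc.second_nonneg hw.toHasLogDerivs hu.toHasLogDerivs htT hx,
      hw.le_time x hc.mem t ht, mul_le_mul_of_nonneg_right hcenter hs.le]
  have hreaction := neg_le_div_mul_exp_neg_sub_div hμ hux hB
    (by positivity : 0 ≤ 2 * L + (L * (b - a)) ^ 2) ⟨hs.le, hsmall⟩ hsecond
  rw [← hc.eq_mul_exp hw.toHasLogDerivs hu.toHasLogDerivs htT] at hreaction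
  have hsub : V x t / u x t ≤ B x t / u x t :=
    div_le_div_of_nonneg_right (hu.time_le x hc.mem t ht) (hμ.le.trans hux)
  linarith [hc.time_nonpos hw.toHasLogDerivs hu.toHasLogDerivs htT,
    mul_lt_mul_of_pos_right hK hs]

lemma IsSubsolution.exists_barrierGap_pos (hg : LocallyLipschitzOn (Ioi 0) g) (hab : a < b)
    (hu : IsSubsolution a b T g u A B V) (hw : IsSupersolution a b T g w A' B' V')
    (h0 : ∀ x ∈ Icc a b, u x 0 ≤ w x 0) (hτ : τ ∈ Ico 0 T) :
    ∃ L K R : ℝ, 0 < R ∧ ∀ δ > 0, δ * R ≤ 1 →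
      ∀ x ∈ Icc a b, 0 < barrierGap a b L K δ w u x τ := by
  obtain ⟨μ, hμ, M, N, hbounds⟩ := hu.exists_bounds hτ.2
  obtain ⟨C, hC⟩ := (hg.mono fun y hy => (div_pos hμ zero_lt_three).trans_le hy.1 :
    LocallyLipschitzOn (Icc (μ / 3) M) g).exists_lipschitzOnWith_of_compact isCompact_Icc
  obtain ⟨L, hL⟩ := exists_gt (max 0 (C * M / (b - a)))
  obtain ⟨K, hK⟩ := exists_gt (max 0 ((2 * N + 3 * (2 * L + (L * (b - a)) ^ 2)) / μ))
  rw [max_lt_iff] at hL hK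
  refine ⟨L, K, exp (K * τ), exp_pos _, fun δ hδ hδR x₁ hx₁ => ?_⟩
  by_contra! hle
  obtain ⟨x, hx, t, ht, hzero, hnonneg⟩ := exists_first_zero isCompact_Icc
    ((continuousOn_barrierGap hw.toHasLogDerivs hu.toHasLogDerivs).mono
      (prod_mono_right (Icc_subset_Ico_right hτ.2)))
    (fun x hx => add_pos_of_nonneg_of_pos (sub_nonneg.2 (log_le_log
      (hu.pos x hx 0 ⟨le_rfl, hτ.1.trans_lt hτ.2⟩) (h0 x hx))) (mul_pos hδ barrier_pos))
    hx₁ (right_mem_Icc.2 hτ.1) hle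
  have hc : IsFirstContact a b L K δ w u x t := ⟨hx, ht.1, hzero, hnonneg⟩
  have htT : t < T := ht.2.trans_lt hτ.2
  have hsmall : δ * barrier a b L K x t ≤ 1 :=
    (mul_le_mul_of_nonneg_left (barrier_le_exp hL.1.le hK.1.le hx ht.2) hδ.le).trans hδR
  obtain ⟨hux, hB⟩ := hbounds x hx t (Ioc_subset_Icc_self ht)
  have hsteep : C * M < L * (b - a) := (div_lt_iff₀ (sub_pos.2 hab)).1 hL.2
  rcases eq_endpoints_or_mem_Ioo_of_mem_Icc hx with hxa | hxb | hx_interior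
  · exact hu.not_isFirstContact_of_boundary hab hw hC hμ hsteep htT hδ hsmall hux (.inl hxa) hc
  · exact hu.not_isFirstContact_of_boundary hab hw hC hμ hsteep htT hδ hsmall hux (.inr hxb) hc
  · exact hu.not_isFirstContact_of_interior hw hμ hL.1.le hK.2 htT hδ hsmall hux.1 hB hx_interior hc

theorem IsSubsolution.le_of_isSupersolution (hg : LocallyLipschitzOn (Ioi 0) g) (hab : a < b)
    (hu : IsSubsolution a b T g u A B V) (hw : IsSupersolution a b T g w A' B' V')
    (h0 : ∀ x ∈ Icc a b, u x 0 ≤ w x 0) (hx : x ∈ Icc a b) (ht : t ∈ Ico 0 T) :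
    u x t ≤ w x t := by
  obtain ⟨L, K, R, hR, hgap⟩ := hu.exists_barrierGap_pos hg hab hw h0 ht
  rw [← log_le_log_iff (hu.pos x hx t ht) (hw.pos x hx t ht), ← sub_nonneg]
  have hlim : Tendsto (fun δ => barrierGap a b L K δ w u x t) (𝓝[>] 0)
      (𝓝 (log (w x t) - log (u x t))) := by
    refine tendsto_nhdsWithin_of_tendsto_nhds (Continuous.tendsto' ?_ 0 _ ?_)
    · unfold barrierGap
      fun_prop
    · simp only [barrierGap, zero_mul, add_zero]
  refine ge_of_tendsto hlim ?_
  filter_upwards [Ioc_mem_nhdsGT (inv_pos.2 hR)] with δ hδ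
  exact (hgap δ hδ.1 ((le_div_iff₀ hR).1 (hδ.2.trans_eq (one_div R).symm)) x hx).le

end Comparison

section FluxSolution

variable {a b T T' h : ℝ} {g : ℝ → ℝ} {u A B V : ℝ → ℝ → ℝ} {x t : ℝ}

lemma HasLogDerivs.shift (hu : HasLogDerivs a b T u A B V) (hh : 0 ≤ h) (hT' : T' + h ≤ T) :
    HasLogDerivs a b T' (fun x t => u x (t + h)) (fun x t => A x (t + h))
      (fun x t => B x (t + h)) (fun x t => V x (t + h)) := by
  have hmaps : ∀ t ∈ Ico 0 T', t + h ∈ Ico 0 T := fun t ht =>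
    ⟨add_nonneg ht.1 hh, by linarith [ht.2]⟩
  have hmaps' : MapsTo (fun q : ℝ × ℝ => (q.1, q.2 + h)) (Icc a b ×ˢ Ico 0 T')
      (Icc a b ×ˢ Ico 0 T) := fun q hq => ⟨hq.1, hmaps q.2 hq.2⟩
  have hcont : ContinuousOn (fun q : ℝ × ℝ => (q.1, q.2 + h)) (Icc a b ×ˢ Ico 0 T') := by fun_prop
  exact
    { pos := fun x hx t ht => hu.pos x hx _ (hmaps t ht)
      continuousOn := hu.continuousOn.comp hcont hmaps'
      continuousOn_second := hu.continuousOn_second.comp hcont hmaps'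
      hasDeriv_log := fun x hx t ht => hu.hasDeriv_log x hx _ (hmaps t ht)
      hasDeriv_slope := fun x hx t ht => hu.hasDeriv_slope x hx _ (hmaps t ht)
      hasDeriv_time := fun x hx t ht =>
        ((hu.hasDeriv_time x hx _ (hmaps t ht)).scomp t
          ((hasDerivAt_id t).add_const h).hasDerivWithinAt hmaps).congr_deriv (one_smul ℝ _) }

lemma HasLogDerivs.stationary (hu : HasLogDerivs a b T u A B V) (hT : 0 < T) :
    HasLogDerivs a b T (fun x _ => u x 0) (fun x _ => A x 0) (fun x _ => B x 0)
      (fun _ _ => 0) := by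
  have h0 : (0 : ℝ) ∈ Ico 0 T := ⟨le_rfl, hT⟩
  have hmaps : MapsTo (fun q : ℝ × ℝ => (q.1, (0 : ℝ))) (Icc a b ×ˢ Ico 0 T)
      (Icc a b ×ˢ Ico 0 T) := fun q hq => ⟨hq.1, h0⟩
  have hcont : ContinuousOn (fun q : ℝ × ℝ => (q.1, (0 : ℝ))) (Icc a b ×ˢ Ico 0 T) := by fun_prop
  exact
    { pos := fun x hx _ _ => hu.pos x hx 0 h0
      continuousOn := hu.continuousOn.comp hcont hmaps
      continuousOn_second := hu.continuousOn_second.comp hcont hmaps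
      hasDeriv_log := fun x hx _ _ => hu.hasDeriv_log x hx 0 h0
      hasDeriv_slope := fun x hx _ _ => hu.hasDeriv_slope x hx 0 h0
      hasDeriv_time := fun _ _ _ _ => hasDerivWithinAt_const _ _ _ }

namespace IsFluxSolution

lemma isSubsolution (hu : IsFluxSolution a b T g u A V) : IsSubsolution a b T g u A V V where
  toHasLogDerivs := hu.toHasLogDerivs
  time_le _ _ _ _ := le_rfl
  flux_left t ht := (hu.flux_left t ht).le
  flux_right t ht := (hu.flux_right t ht).le

lemma isSupersolution (hu : IsFluxSolution a b T g u A V) :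
    IsSupersolution a b T g u A V V where
  toHasLogDerivs := hu.toHasLogDerivs
  le_time _ _ _ _ := le_rfl
  flux_left t ht := (hu.flux_left t ht).ge
  flux_right t ht := (hu.flux_right t ht).ge

lemma shift (hu : IsFluxSolution a b T g u A V) (hh : 0 ≤ h) (hT' : T' + h ≤ T) :
    IsFluxSolution a b T' g (fun x t => u x (t + h)) (fun x t => A x (t + h))
      (fun x t => V x (t + h)) where
  toHasLogDerivs := hu.toHasLogDerivs.shift hh hT'
  flux_left t ht := hu.flux_left _ ⟨add_nonneg ht.1 hh, by linarith [ht.2]⟩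
  flux_right t ht := hu.flux_right _ ⟨add_nonneg ht.1 hh, by linarith [ht.2]⟩

lemma isSupersolution_initial (hu : IsFluxSolution a b T g u A V) (hT : 0 < T)
    (hV : ∀ x ∈ Icc a b, V x 0 ≤ 0) :
    IsSupersolution a b T g (fun x _ => u x 0) (fun x _ => A x 0) (fun x _ => V x 0)
      (fun _ _ => 0) where
  toHasLogDerivs := hu.toHasLogDerivs.stationary hT
  le_time x hx _ _ := hV x hx
  flux_left _ _ := (hu.flux_left 0 ⟨le_rfl, hT⟩).ge
  flux_right _ _ := (hu.flux_right 0 ⟨le_rfl, hT⟩).ge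

lemma le_initial (hu : IsFluxSolution a b T g u A V) (hg : LocallyLipschitzOn (Ioi 0) g)
    (hab : a < b) (hV : ∀ x ∈ Icc a b, V x 0 ≤ 0) (hx : x ∈ Icc a b) (ht : t ∈ Ico 0 T) :
    u x t ≤ u x 0 :=
  hu.isSubsolution.le_of_isSupersolution hg hab
    (hu.isSupersolution_initial (ht.1.trans_lt ht.2) hV) (fun _ _ => le_rfl) hx ht

lemma antitoneOn (hu : IsFluxSolution a b T g u A V) (hg : LocallyLipschitzOn (Ioi 0) g)
    (hab : a < b) (hV : ∀ x ∈ Icc a b, V x 0 ≤ 0) (hx : x ∈ Icc a b) :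
    AntitoneOn (u x) (Ico 0 T) := by
  intro s hs t ht hst
  have hlater := hu.shift (T' := T - (t - s)) (sub_nonneg.2 hst) (by linarith)
  have hearlier := hu.shift (T' := T - (t - s)) le_rfl (by linarith)
  have hdelay : u x (s + (t - s)) ≤ u x (s + 0) :=
    hlater.isSubsolution.le_of_isSupersolution hg hab hearlier.isSupersolution
      (fun y hy => by
        simpa only [zero_add] using
          hu.le_initial hg hab hV hy ⟨sub_nonneg.2 hst, by linarith [hs.1, ht.2]⟩)
      hx ⟨hs.1, by linarith [ht.2]⟩
  rwa [add_sub_cancel, add_zero] at hdelay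

lemma time_deriv_nonpos (hu : IsFluxSolution a b T g u A V)
    (hg : LocallyLipschitzOn (Ioi 0) g) (hab : a < b) (hV : ∀ x ∈ Icc a b, V x 0 ≤ 0)
    (hx : x ∈ Icc a b) (ht : t ∈ Ico 0 T) : V x t ≤ 0 :=
  (hu.hasDeriv_time x hx t ht).nonpos_of_antitoneOn (uniqueDiffOn_Ico 0 T t ht).accPt
    (hu.antitoneOn hg hab hV hx)

lemma concaveOn_log (hu : IsFluxSolution a b T g u A V) (hg : LocallyLipschitzOn (Ioi 0) g)
    (hab : a < b) (hV : ∀ x ∈ Icc a b, V x 0 ≤ 0) (ht : t ∈ Ico 0 T) :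
    ConcaveOn ℝ (Icc a b) fun x => log (u x t) := by
  have hlog := fun x hx => hu.hasDeriv_log x hx t ht
  refine concaveOn_of_hasDerivWithinAt2_nonpos (convex_Icc a b)
    (fun x hx => (hlog x hx).continuousWithinAt)
    (fun x hx => (hlog x (interior_subset hx)).mono interior_subset)
    (fun x hx => (hu.hasDeriv_slope x (interior_subset hx) t ht).mono interior_subset)
    fun x hx => hu.time_deriv_nonpos hg hab hV (interior_subset hx) ht

lemma min_boundary_le (hu : IsFluxSolution a b T g u A V) (hg : LocallyLipschitzOn (Ioi 0) g)
    (hab : a < b) (hV : ∀ x ∈ Icc a b, V x 0 ≤ 0) (hx : x ∈ Icc a b) (ht : t ∈ Ico 0 T) :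
    min (u a t) (u b t) ≤ u x t := by
  have hmin := (hu.concaveOn_log hg hab hV ht).min_le_of_mem_Icc (left_mem_Icc.2 hab.le)
    (right_mem_Icc.2 hab.le) hx
  have hpos := fun y hy => hu.pos y hy t ht
  rcases min_le_iff.1 hmin with hle | hle
  · exact min_le_of_left_le
      ((log_le_log_iff (hpos a (left_mem_Icc.2 hab.le)) (hpos x hx)).1 hle)
  · exact min_le_of_right_le
      ((log_le_log_iff (hpos b (right_mem_Icc.2 hab.le)) (hpos x hx)).1 hle)

end IsFluxSolution

end FluxSolution

/-! ### Integrals depending on a parameter -/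

section ParametricIntegral

variable {E : Type*} [NormedAddCommGroup E] [NormedSpace ℝ E] {a b : ℝ}

lemma continuousOn_intervalIntegral_of_continuousOn {X : Type*} [TopologicalSpace X]
    [FirstCountableTopology X] {F : ℝ → X → E} {K : Set X} (hK : IsCompact K)
    (hF : ContinuousOn ↿F (uIcc a b ×ˢ K)) : ContinuousOn (fun t => ∫ x in a..b, F x t) K := by
  obtain ⟨M, hM⟩ := (isCompact_uIcc.prod hK).exists_bound_of_continuousOn hF
  intro t ht
  refine intervalIntegral.continuousWithinAt_of_dominated_interval (F := fun t x => F x t)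
    (bound := fun _ => M) ?_ ?_ intervalIntegrable_const (.of_forall fun x hx => ?_)
  · filter_upwards [self_mem_nhdsWithin] with s hs
    exact ((hF.uncurry_right s hs).mono uIoc_subset_uIcc).aestronglyMeasurable measurableSet_uIoc
  · filter_upwards [self_mem_nhdsWithin] with s hs
    exact .of_forall fun x hx => hM (x, s) ⟨uIoc_subset_uIcc hx, hs⟩
  · exact hF.uncurry_left x (uIoc_subset_uIcc hx) t ht

lemma hasDerivAt_intervalIntegral_of_continuousOn {F F' : ℝ → ℝ → E} {U : Set ℝ} {t : ℝ}
    (hU : U ∈ 𝓝 t) (hF : ContinuousOn ↿F (uIcc a b ×ˢ U))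
    (hF' : ContinuousOn ↿F' (uIcc a b ×ˢ U))
    (hderiv : ∀ x ∈ uIcc a b, ∀ s ∈ U, HasDerivAt (F x) (F' x s) s) :
    HasDerivAt (fun s => ∫ x in a..b, F x s) (∫ x in a..b, F' x t) t := by
  obtain ⟨K, hKt, hKU, hK⟩ := local_compact_nhds hU
  obtain ⟨M, hM⟩ := (isCompact_uIcc.prod hK).exists_bound_of_continuousOn
    (hF'.mono (prod_mono_right hKU))
  have htU : t ∈ U := mem_of_mem_nhds hU
  refine (intervalIntegral.hasDerivAt_integral_of_dominated_loc_of_deriv_le (μ := volume)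
    (F := fun s x => F x s) (F' := fun s x => F' x s) (bound := fun _ => M) hKt ?_
    (hF.uncurry_right t htU).intervalIntegrable ?_ (.of_forall fun x hx s hs => ?_)
    intervalIntegrable_const (.of_forall fun x hx s hs => ?_)).2
  · filter_upwards [hU] with s hs
    exact ((hF.uncurry_right s hs).mono uIoc_subset_uIcc).aestronglyMeasurable measurableSet_uIoc
  · exact ((hF'.uncurry_right t htU).mono uIoc_subset_uIcc).aestronglyMeasurable measurableSet_uIoc
  · exact hM (x, s) ⟨uIoc_subset_uIcc hx, hs⟩
  · exact hderiv x (uIoc_subset_uIcc hx) s (hKU hs)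

end ParametricIntegral

/-! ### The evolution of the mass -/

section Mass

variable {a b T c m γ ε p t y z : ℝ} {g : ℝ → ℝ} {u A V : ℝ → ℝ → ℝ}

/-- The mass `m(t)` of `u(·, t)` on `[a,b]`. -/
noncomputable def mass (a b : ℝ) (u : ℝ → ℝ → ℝ) (t : ℝ) : ℝ := ∫ x in a..b, u x t

lemma mul_le_mass (hab : a ≤ b) (hu : ContinuousOn (fun x => u x t) (Icc a b))
    (hc : ∀ x ∈ Icc a b, c ≤ u x t) : (b - a) * c ≤ mass a b u t := by
  simpa only [mass, intervalIntegral.integral_const, smul_eq_mul] using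
    intervalIntegral.integral_mono_on (μ := volume) hab intervalIntegrable_const
      (hu.intervalIntegrable_of_Icc hab) hc

lemma mass_pos_of_continuousOn (hab : a < b) (hu : ContinuousOn (fun x => u x t) (Icc a b))
    (hpos : ∀ x ∈ Icc a b, 0 < u x t) : 0 < mass a b u t :=
  intervalIntegral.intervalIntegral_pos_of_pos_on (hu.intervalIntegrable_of_Icc hab.le)
    (fun x hx => hpos x (Ioo_subset_Icc_self hx)) hab

namespace IsFluxSolution

variable (hu : IsFluxSolution a b T g u A V)
include hu

lemma continuousOn_space (ht : t ∈ Ico 0 T) : ContinuousOn (fun x => u x t) (Icc a b) :=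
  hu.continuousOn.uncurry_right t ht

lemma mass_pos (hab : a < b) (ht : t ∈ Ico 0 T) : 0 < mass a b u t :=
  mass_pos_of_continuousOn hab (hu.continuousOn_space ht) fun x hx => hu.pos x hx t ht

lemma continuousOn_mass (hab : a ≤ b) (ht : t < T) : ContinuousOn (mass a b u) (Icc 0 t) := by
  refine continuousOn_intervalIntegral_of_continuousOn isCompact_Icc ?_
  rw [uIcc_of_le hab]
  exact hu.continuousOn.mono (prod_mono_right (Icc_subset_Ico_right ht))

lemma hasDerivAt_mass (hab : a ≤ b) (ht : t ∈ Ioo 0 T) :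
    HasDerivAt (mass a b u) (g (u b t) + g (u a t)) t := by
  have ht' : t ∈ Ico 0 T := Ioo_subset_Ico_self ht
  have hsub : uIcc a b ×ˢ Ioo 0 T ⊆ Icc a b ×ˢ Ico 0 T :=
    prod_mono (uIcc_of_le hab).subset Ioo_subset_Ico_self
  have hleibniz := hasDerivAt_intervalIntegral_of_continuousOn (Ioo_mem_nhds ht.1 ht.2)
    (hu.continuousOn.mono hsub) (hu.continuousOn_second.mono hsub) fun x hx s hs =>
      (hu.hasDeriv_time x ((uIcc_of_le hab).subset hx) s (Ioo_subset_Ico_self hs)).hasDerivAt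
        (Ico_mem_nhds hs.1 hs.2)
  have hftc : ∫ x in a..b, V x t = A b t - A a t :=
    intervalIntegral.integral_eq_sub_of_hasDerivAt_of_le hab
      (fun x hx => (hu.hasDeriv_slope x hx t ht').continuousWithinAt)
      (fun x hx => (hu.hasDeriv_slope x (Ioo_subset_Icc_self hx) t ht').hasDerivAt
        (Icc_mem_nhds hx.1 hx.2))
      ((hu.continuousOn_second.uncurry_right t ht').intervalIntegrable_of_Icc hab)
  exact hleibniz.congr_deriv (by rw [hftc, ← hu.flux_right t ht', ← hu.flux_left t ht']; ring)

end IsFluxSolution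

/-- The value of `∂ₓ log u` prescribed by the boundary condition `∂ₓu = 2γ u^p` where `u = y`. -/
noncomputable def robinFlux (γ p y : ℝ) : ℝ := 2 * γ * y ^ (p - 1)

lemma contDiffOn_robinFlux : ContDiffOn ℝ 1 (robinFlux γ p) (Ioi 0) := fun _ hy =>
  (contDiffAt_const.mul (contDiffAt_rpow_const_of_ne (ne_of_gt hy))).contDiffWithinAt

lemma locallyLipschitzOn_robinFlux : LocallyLipschitzOn (Ioi 0) (robinFlux γ p) :=
  contDiffOn_robinFlux.locallyLipschitzOn (convex_Ioi 0)

lemma robinFlux_nonpos (hγ : γ ≤ 0) (hy : 0 ≤ y) : robinFlux γ p y ≤ 0 :=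
  mul_nonpos_of_nonpos_of_nonneg (by linarith) (rpow_nonneg hy _)

lemma robinFlux_add_le (hγ : γ ≤ 0) (hy : 0 ≤ y) (hz : 0 ≤ z) :
    robinFlux γ p y + robinFlux γ p z ≤ robinFlux γ p (min y z) := by
  rcases min_choice y z with hmin | hmin <;> rw [hmin]
  · exact add_le_of_nonpos_right (robinFlux_nonpos hγ hz)
  · exact add_le_of_nonpos_left (robinFlux_nonpos hγ hy)

lemma robinFlux_one_sub_mul_rpow_le {d : ℝ} (hγ : γ ≤ 0) (hε : 0 ≤ ε) (hd : 0 ≤ d) (hy : 0 < y)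
    (hm : d * y ≤ m) : robinFlux γ (1 - ε) y * m ^ ε ≤ 2 * γ * d ^ ε := by
  have hcancel : d ^ ε ≤ y ^ (-ε) * m ^ ε := by
    calc d ^ ε = y ^ (-ε) * (d * y) ^ ε := by
          rw [mul_rpow hd hy.le, mul_left_comm, ← rpow_add hy, neg_add_cancel, rpow_zero, mul_one]
      _ ≤ y ^ (-ε) * m ^ ε :=
          mul_le_mul_of_nonneg_left (rpow_le_rpow (mul_nonneg hd hy.le) hm hε) (rpow_nonneg hy.le _)
  rw [robinFlux, sub_sub_cancel_left, mul_assoc]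
  exact mul_le_mul_of_nonpos_left hcancel (by linarith)

lemma rpow_le_rpow_add_mul {f f' : ℝ → ℝ} {q α : ℝ} (ht : 0 ≤ t)
    (hf : ContinuousOn f (Icc 0 t)) (hpos : ∀ s ∈ Icc 0 t, 0 < f s)
    (hderiv : ∀ s ∈ Ioo 0 t, HasDerivAt f (f' s) s)
    (hle : ∀ s ∈ Ioo 0 t, f' s * q * f s ^ (q - 1) ≤ α) : f t ^ q ≤ f 0 ^ q + α * t := by
  have hderivq : ∀ s ∈ interior (Icc 0 t),
      HasDerivAt (fun s => f s ^ q) (f' s * q * f s ^ (q - 1)) s := fun s hs => by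
    rw [interior_Icc] at hs
    exact (hderiv s hs).rpow_const (.inl (hpos s (Ioo_subset_Icc_self hs)).ne')
  have hincr := (convex_Icc 0 t).image_sub_le_mul_sub_of_deriv_le
    (hf.rpow_const fun s hs => .inl (hpos s hs).ne')
    (fun s hs => (hderivq s hs).differentiableAt.differentiableWithinAt)
    (fun s hs => (hderivq s hs).deriv.trans_le (hle s (interior_Icc.subset hs)))
    0 (left_mem_Icc.2 ht) t (right_mem_Icc.2 ht) ht
  linarith

-- By log-concavity the mean of `u` is at least its smaller boundary value, which controls the loss.
lemma IsFluxSolution.flux_mul_mass_rpow_le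
    (hu : IsFluxSolution a b T (robinFlux γ (1 - ε)) u A V) (hab : a < b) (hγ : γ ≤ 0)
    (hε : 0 ≤ ε) (hV : ∀ x ∈ Icc a b, V x 0 ≤ 0) (ht : t ∈ Ico 0 T) :
    (robinFlux γ (1 - ε) (u b t) + robinFlux γ (1 - ε) (u a t)) * mass a b u t ^ ε ≤
      2 * γ * (b - a) ^ ε := by
  have hpos_left : 0 < u a t := hu.pos a (left_mem_Icc.2 hab.le) t ht
  have hpos_right : 0 < u b t := hu.pos b (right_mem_Icc.2 hab.le) t ht
  have hmass : (b - a) * min (u b t) (u a t) ≤ mass a b u t :=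
    mul_le_mass hab.le (hu.continuousOn_space ht) fun x hx => by
      rw [min_comm]
      exact hu.min_boundary_le locallyLipschitzOn_robinFlux hab hV hx ht
  calc (robinFlux γ (1 - ε) (u b t) + robinFlux γ (1 - ε) (u a t)) * mass a b u t ^ ε
      ≤ robinFlux γ (1 - ε) (min (u b t) (u a t)) * mass a b u t ^ ε :=
        mul_le_mul_of_nonneg_right (robinFlux_add_le hγ hpos_right.le hpos_left.le)
          (rpow_nonneg (hu.mass_pos hab ht).le _)
    _ ≤ 2 * γ * (b - a) ^ ε :=
        robinFlux_one_sub_mul_rpow_le hγ hε (sub_nonneg.2 hab.le)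
          (lt_min hpos_right hpos_left) hmass

theorem IsFluxSolution.mass_rpow_le
    (hu : IsFluxSolution a b T (robinFlux γ (1 - ε)) u A V) (hab : a < b) (hγ : γ ≤ 0)
    (hε : 0 ≤ ε) (hV : ∀ x ∈ Icc a b, V x 0 ≤ 0) (ht : t ∈ Ico 0 T) :
    mass a b u t ^ (1 + ε) ≤
      mass a b u 0 ^ (1 + ε) + 2 * γ * (1 + ε) * (b - a) ^ ε * t := by
  have hsub : Icc 0 t ⊆ Ico 0 T := Icc_subset_Ico_right ht.2
  have hsub' : Ioo 0 t ⊆ Ioo 0 T := Ioo_subset_Ioo_right ht.2.le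
  refine rpow_le_rpow_add_mul ht.1 (hu.continuousOn_mass hab.le ht.2)
    (fun s hs => hu.mass_pos hab (hsub hs)) (fun s hs => hu.hasDerivAt_mass hab.le (hsub' hs))
    fun s hs => ?_
  rw [add_sub_cancel_left]
  linarith [mul_le_mul_of_nonneg_left (hu.flux_mul_mass_rpow_le hab hγ hε hV
    (Ioo_subset_Ico_self (hsub' hs))) (by linarith : 0 ≤ 1 + ε)]

end Mass

/-! ### Regularity of classical solutions -/

section PartialDerivatives

variable {E : Type*} [NormedAddCommGroup E] [NormedSpace ℝ E] {f : ℝ → ℝ → E} {s t : Set ℝ}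
  {n : WithTop ℕ∞}

lemma exists_contDiffOn_partial_fst (hs : UniqueDiffOn ℝ s) (ht : UniqueDiffOn ℝ t)
    (hf : ContDiffOn ℝ (n + 1) ↿f (s ×ˢ t)) :
    ∃ f' : ℝ → ℝ → E, ContDiffOn ℝ n ↿f' (s ×ˢ t) ∧
      ∀ x ∈ s, ∀ y ∈ t, HasDerivWithinAt (fun z => f z y) (f' x y) s x := by
  refine ⟨fun x y => fderivWithin ℝ ↿f (s ×ˢ t) (x, y) (1, 0),
    (hf.fderivWithin (hs.prod ht) le_rfl).clm_apply contDiffOn_const, fun x hx y hy => ?_⟩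
  exact ((hf.differentiableOn (by simp)) (x, y) ⟨hx, hy⟩).hasFDerivWithinAt.comp_hasDerivWithinAt
    (f := fun z => (z, y)) x ((hasDerivWithinAt_id x s).prodMk (hasDerivWithinAt_const x s y))
    fun z hz => ⟨hz, hy⟩

lemma exists_contDiffOn_partial_snd (hs : UniqueDiffOn ℝ s) (ht : UniqueDiffOn ℝ t)
    (hf : ContDiffOn ℝ (n + 1) ↿f (s ×ˢ t)) :
    ∃ f' : ℝ → ℝ → E, ContDiffOn ℝ n ↿f' (s ×ˢ t) ∧
      ∀ x ∈ s, ∀ y ∈ t, HasDerivWithinAt (f x) (f' x y) t y := by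
  refine ⟨fun x y => fderivWithin ℝ ↿f (s ×ˢ t) (x, y) (0, 1),
    (hf.fderivWithin (hs.prod ht) le_rfl).clm_apply contDiffOn_const, fun x hx y hy => ?_⟩
  exact ((hf.differentiableOn (by simp)) (x, y) ⟨hx, hy⟩).hasFDerivWithinAt.comp_hasDerivWithinAt
    (f := fun z => (x, z)) y ((hasDerivWithinAt_const y t x).prodMk (hasDerivWithinAt_id y t))
    fun z hz => ⟨hx, hz⟩

end PartialDerivatives

section Regularity

variable {a b T l γ p x t : ℝ} {u₀ : ℝ → ℝ} {u A B V : ℝ → ℝ → ℝ}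

lemma exists_hasLogDerivs (hab : a < b) (hu : ContDiffOn ℝ 2 ↿u (Icc a b ×ˢ Ico 0 T))
    (hpos : ∀ x ∈ Icc a b, ∀ t ∈ Ico 0 T, 0 < u x t) :
    ∃ A B V, HasLogDerivs a b T u A B V ∧
      ContinuousOn ↿A (Icc a b ×ˢ Ico 0 T) ∧ ContinuousOn ↿V (Icc a b ×ˢ Ico 0 T) := by
  have hx : UniqueDiffOn ℝ (Icc a b) := uniqueDiffOn_Icc hab
  have ht : UniqueDiffOn ℝ (Ico 0 T) := uniqueDiffOn_Ico 0 T
  have hlog : ContDiffOn ℝ 2 ↿(fun x t => log (u x t)) (Icc a b ×ˢ Ico 0 T) :=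
    hu.log fun q hq => (hpos q.1 hq.1 q.2 hq.2).ne'
  obtain ⟨A, hA, hlogA⟩ := exists_contDiffOn_partial_fst (n := 1) hx ht (hlog.of_le (by norm_num))
  obtain ⟨B, hB, hAB⟩ := exists_contDiffOn_partial_fst (n := 0) hx ht (hA.of_le (by norm_num))
  obtain ⟨V, hV, huV⟩ := exists_contDiffOn_partial_snd (n := 0) hx ht (hu.of_le (by norm_num))
  exact ⟨A, B, V, ⟨hpos, hu.continuousOn, hB.continuousOn, hlogA, hAB, huV⟩, hA.continuousOn,
    hV.continuousOn⟩

namespace HasLogDerivs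

variable (hu : HasLogDerivs a b T u A B V)
include hu

lemma deriv_deriv_log (hx : x ∈ Ioo a b) (ht : t ∈ Ico 0 T) :
    deriv (deriv fun y => log (u y t)) x = B x t := by
  have hslope : deriv (fun y => log (u y t)) =ᶠ[𝓝 x] fun y => A y t := by
    filter_upwards [Ioo_mem_nhds hx.1 hx.2] with y hy
    exact ((hu.hasDeriv_log y (Ioo_subset_Icc_self hy) t ht).hasDerivAt
      (Icc_mem_nhds hy.1 hy.2)).deriv
  rw [hslope.deriv_eq]
  exact ((hu.hasDeriv_slope x (Ioo_subset_Icc_self hx) t ht).hasDerivAt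
    (Icc_mem_nhds hx.1 hx.2)).deriv

lemma second_eq_time (hab : a < b) (hV : ContinuousOn ↿V (Icc a b ×ˢ Ico 0 T))
    (hpde : ∀ x ∈ Ioo a b, ∀ t ∈ Ioo 0 T,
      deriv (u x) t = deriv (deriv fun y => log (u y t)) x)
    (hx : x ∈ Icc a b) (ht : t ∈ Ico 0 T) : B x t = V x t := by
  have hinterior : EqOn ↿B ↿V (Ioo a b ×ˢ Ioo 0 T) := by
    rintro ⟨x, t⟩ ⟨hx, ht⟩
    have ht' := Ioo_subset_Ico_self ht
    exact (hu.deriv_deriv_log hx ht').symm.trans ((hpde x hx t ht).symm.trans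
      ((hu.hasDeriv_time x (Ioo_subset_Icc_self hx) t ht').hasDerivAt
        (Ico_mem_nhds ht.1 ht.2)).deriv)
  refine hinterior.of_subset_closure hu.continuousOn_second hV
    (prod_mono Ioo_subset_Icc_self Ioo_subset_Ico_self) ?_ (mk_mem_prod hx ht)
  rw [closure_prod_eq, closure_Ioo hab.ne, closure_Ioo (ht.1.trans_lt ht.2).ne]
  exact prod_mono_right Ico_subset_Icc_self

-- A nonzero two-sided derivative is not a junk value, so it agrees with the one-sided one.
lemma slope_eq_of_deriv_ne_zero (hab : a < b) (hx : x ∈ Icc a b) (ht : t ∈ Ico 0 T)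
    (hne : deriv (fun y => u y t) x ≠ 0) : A x t = deriv (fun y => u y t) x / u x t := by
  have hgenuine : HasDerivAt (fun y => u y t) (deriv (fun y => u y t) x) x :=
    (differentiableAt_of_deriv_ne_zero hne).hasDerivAt
  exact (uniqueDiffOn_Icc hab x hx).eq_deriv _ (hu.hasDeriv_log x hx t ht)
    (hgenuine.log (hu.pos x hx t ht).ne').hasDerivWithinAt

lemma slope_eq_robinFlux (hab : a < b) (hγ : γ ≠ 0) (hA : ContinuousOn ↿A (Icc a b ×ˢ Ico 0 T))
    (hx : x ∈ Icc a b) (hbdry : ∀ t ∈ Ioo 0 T, deriv (fun y => u y t) x = 2 * γ * u x t ^ p)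
    (ht : t ∈ Ico 0 T) : A x t = robinFlux γ p (u x t) := by
  have hpositive : ∀ s ∈ Ioo 0 T, A x s = robinFlux γ p (u x s) := by
    intro s hs
    have hpos := hu.pos x hx s (Ioo_subset_Ico_self hs)
    have hne : deriv (fun y => u y s) x ≠ 0 := by
      rw [hbdry s hs]
      exact mul_ne_zero (mul_ne_zero two_ne_zero hγ) (rpow_pos_of_pos hpos p).ne'
    rw [hu.slope_eq_of_deriv_ne_zero hab hx (Ioo_subset_Ico_self hs) hne, hbdry s hs, mul_div_assoc,
      ← rpow_sub_one hpos.ne', robinFlux]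
  have hflux : ContinuousOn (fun t => robinFlux γ p (u x t)) (Ico 0 T) :=
    contDiffOn_robinFlux.continuousOn.comp (hu.continuousOn.uncurry_left x hx)
      fun s hs => hu.pos x hx s hs
  refine EqOn.of_subset_closure hpositive (hA.uncurry_left x hx) hflux Ioo_subset_Ico_self ?_ ht
  rw [closure_Ioo (ht.1.trans_lt ht.2).ne]
  exact Ico_subset_Icc_self

lemma second_nonpos (hab : a < b) (ht : t ∈ Ico 0 T)
    (hconcave : ∀ x ∈ Ioo a b, deriv (deriv fun y => log (u y t)) x ≤ 0) (hx : x ∈ Icc a b) :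
    B x t ≤ 0 := by
  have hcont : ContinuousOn (fun x => B x t) (Icc a b) := hu.continuousOn_second.uncurry_right t ht
  rw [← closure_Ioo hab.ne] at hx hcont
  exact le_on_closure (fun y hy => (hu.deriv_deriv_log hy ht).symm.trans_le (hconcave y hy)) hcont
    continuousOn_const hx

end HasLogDerivs

theorem IsLogDiffSol.exists_isFluxSolution (hu : IsLogDiffSol l γ p T u₀ u) (hl : 0 < l)
    (hγ : γ ≠ 0) : ∃ A V, IsFluxSolution (-l) l T (robinFlux γ p) u A V := by
  obtain ⟨hsmooth, hpos, hpde, hright, hleft, -⟩ := hu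
  have hll : -l < l := neg_lt_self hl
  obtain ⟨A, B, V, hlog, hA, hV⟩ := exists_hasLogDerivs hll hsmooth hpos
  have hBV : ∀ x ∈ Icc (-l) l, ∀ t ∈ Ico 0 T, B x t = V x t := fun x hx t ht =>
    hlog.second_eq_time hll hV (fun x hx => hpde x (Ioo_subset_Icc_self hx)) hx ht
  have hleft' : ∀ t ∈ Ioo 0 T, deriv (fun y => u y t) (-l) = 2 * -γ * u (-l) t ^ p :=
    fun t ht => (hleft t ht).trans (by ring)
  refine ⟨A, V, { hlog with
    continuousOn_second := hV
    hasDeriv_slope := fun x hx t ht => hBV x hx t ht ▸ hlog.hasDeriv_slope x hx t ht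
    flux_left := fun t ht => ?_
    flux_right := fun t ht =>
      hlog.slope_eq_robinFlux hll hγ hA (right_mem_Icc.2 hll.le) hright ht }⟩
  rw [hlog.slope_eq_robinFlux hll (neg_ne_zero.2 hγ) hA (left_mem_Icc.2 hll.le) hleft' ht,
    robinFlux, robinFlux]
  ring

end Regularity

/-! ### Finite-time blow-down -/

lemma le_div_of_forall_add_mul_pos {M α T : ℝ} (hM : 0 ≤ M) (hα : α < 0)
    (hpos : ∀ t ∈ Ico 0 T, 0 < M + α * t) : T ≤ -M / α := by
  have hextinction : 0 ≤ -M / α := div_nonneg_of_nonpos (neg_nonpos.2 hM) hα.le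
  by_contra! hlt
  have hvanish := hpos (-M / α) ⟨hextinction, hlt⟩
  rw [mul_div_cancel₀ _ hα.ne, add_neg_cancel] at hvanish
  exact hvanish.false

lemma IsLogDiffSol.mass_pos {l γ p T t : ℝ} {u₀ : ℝ → ℝ} {u : ℝ → ℝ → ℝ}
    (hu : IsLogDiffSol l γ p T u₀ u) (hl : 0 < l) (ht : t ∈ Ico 0 T) :
    0 < mass (-l) l u t :=
  mass_pos_of_continuousOn (neg_lt_self hl) (hu.1.continuousOn.uncurry_right t ht)
    fun x hx => hu.2.1 x hx t ht

theorem IsLogDiffSol.mass_rpow_le {l γ ε T : ℝ} {u₀ : ℝ → ℝ} {u : ℝ → ℝ → ℝ}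
    (hu : IsLogDiffSol l γ (1 - ε) T u₀ u) (hl : 0 < l) (hγ : γ < 0) (hε : 0 ≤ ε)
    (hconcave : ∀ x ∈ Ioo (-l) l, deriv (deriv fun y => log (u₀ y)) x ≤ 0)
    {t : ℝ} (ht : t ∈ Ico 0 T) :
    mass (-l) l u t ^ (1 + ε) ≤
      (∫ x in (-l)..l, u₀ x) ^ (1 + ε) + 2 * γ * (1 + ε) * (2 * l) ^ ε * t := by
  have hll : -l < l := neg_lt_self hl
  have h0 : (0 : ℝ) ∈ Ico 0 T := ⟨le_rfl, ht.1.trans_lt ht.2⟩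
  have hinit : ∀ x ∈ Icc (-l) l, u x 0 = u₀ x := hu.2.2.2.2.2
  obtain ⟨A, V, hflux⟩ := hu.exists_isFluxSolution hl hγ.ne
  have hlog : ∀ x ∈ Ioo (-l) l, (fun y => log (u y 0)) =ᶠ[𝓝 x] fun y => log (u₀ y) := fun x hx => by
    filter_upwards [Icc_mem_nhds hx.1 hx.2] with y hy using by rw [hinit y hy]
  have hV : ∀ x ∈ Icc (-l) l, V x 0 ≤ 0 := fun x hx =>
    hflux.second_nonpos hll h0 (fun y hy => (hlog y hy).deriv.deriv_eq.trans_le (hconcave y hy)) hx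
  have hmass : mass (-l) l u 0 = ∫ x in (-l)..l, u₀ x :=
    intervalIntegral.integral_congr fun x hx => hinit x ((uIcc_of_le hll.le).subset hx)
  have hbound := hflux.mass_rpow_le hll hγ.le hε hV ht
  rwa [hmass, sub_neg_eq_add, ← two_mul] at hbound

theorem finite_time_blowdown_p_lt_one_general
    (l γ ε T : ℝ) (hl : 0 < l) (hγ : γ < 0) (hε : 0 ≤ ε) (u₀ : ℝ → ℝ)
    (hu₀pos : ∀ x ∈ Icc (-l) l, 0 < u₀ x)
    (hconcave : ∀ x ∈ Ioo (-l) l, deriv (deriv (fun y => Real.log (u₀ y))) x ≤ 0)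
    (u : ℝ → ℝ → ℝ) (hu : IsLogDiffSol l γ (1 - ε) T u₀ u) :
    (∀ t ∈ Ico (0:ℝ) T,
      (∫ x in (-l)..l, u x t) ^ (1 + ε) ≤
        (∫ x in (-l)..l, u₀ x) ^ (1 + ε) + (2 * γ * (1 + ε) * (2 * l) ^ ε) * t) ∧
    T ≤ -((∫ x in (-l)..l, u₀ x) ^ (1 + ε)) / (2 * γ * (1 + ε) * (2 * l) ^ ε) := by
  have hinit_nonneg : 0 ≤ ∫ x in (-l)..l, u₀ x :=
    intervalIntegral.integral_nonneg (neg_lt_self hl).le fun x hx => (hu₀pos x hx).le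
  have hrate : 2 * γ * (1 + ε) * (2 * l) ^ ε < 0 :=
    mul_neg_of_neg_of_pos (mul_neg_of_neg_of_pos (by linarith) (by linarith))
      (rpow_pos_of_pos (by linarith) ε)
  exact ⟨fun t ht => hu.mass_rpow_le hl hγ hε hconcave ht,
    le_div_of_forall_add_mul_pos (rpow_nonneg hinit_nonneg _) hrate fun t ht =>
      (rpow_pos_of_pos (hu.mass_pos hl ht) _).trans_le (hu.mass_rpow_le hl hγ hε hconcave ht)⟩

theorem finite_time_blowdown_p_lt_one
    (l γ ε T : ℝ) (hl : 0 < l) (hγ : γ < 0) (hε : 0 < ε) (u₀ : ℝ → ℝ)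
    (hu₀smooth : ContDiffOn ℝ (⊤ : ℕ∞) u₀ (Icc (-l) l))
    (hu₀pos : ∀ x ∈ Icc (-l) l, 0 < u₀ x)
    (hconcave : ∀ x ∈ Icc (-l) l, deriv (deriv (fun y => Real.log (u₀ y))) x < 0)
    (hcompat : CompatCond l γ (1 - ε) u₀)
    (u : ℝ → ℝ → ℝ) (hu : IsLogDiffSol l γ (1 - ε) T u₀ u) :
    (∀ t ∈ Ico (0:ℝ) T,
      (∫ x in (-l)..l, u x t) ^ (1 + ε) ≤
        (∫ x in (-l)..l, u₀ x) ^ (1 + ε) + (2 * γ * (1 + ε) * (2 * l) ^ ε) * t) ∧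
    T ≤ -((∫ x in (-l)..l, u₀ x) ^ (1 + ε)) / (2 * γ * (1 + ε) * (2 * l) ^ ε) :=
  finite_time_blowdown_p_lt_one_general l γ ε T hl hγ hε.le u₀ hu₀pos
    (fun x hx => (hconcave x (Ioo_subset_Icc_self hx)).le) u hu
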